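/- Complementary slackness (necessity direction): let x* ∈ ℝⁿ be primal feasible (Ax* = b and π ≤ x* ≤ π̄) and let y* = (y*_b, y*_π, y*_π̄) be dual feasible (Aᵀy*_b + y*_π + y*_π̄ = c, y*_π ≥ 0, y*_π̄ ≤ 0). If x* is an optimal solution of the primal linear program and y* is an optimal solution of the dual linear program, then the complementary slackness conditions hold: (x* − π) ⊙ y*_π = 0 and (x* − π̄) ⊙ y*_π̄ = 0, where ⊙ is the componentwise product. -/

import Mathlib

open Matrix

/-!
Complementary slackness follows once the dual optimum is at least the primal optimum: then
`(xs - lo) ⬝ᵥ yl + (xs - hi) ⬝ᵥ yu ≤ 0`, while every term of these sums is nonnegative.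

Since a dual optimum is assumed to exist, it suffices that dual feasible values come within every
`ε > 0` of the primal optimum, so no closedness of finitely generated cones (Farkas) is needed.
The box `[lo, hi]` is compact, hence its image under `x ↦ (A x, c x)` is compact and convex. By
optimality it misses the point `(b, c xs - ε)`, and Hahn–Banach separates the two strictly
(`exists_lagrange_multiplier`). The separating functional is a Lagrange multiplier `yb`; splitting
the reduced cost `c - Aᵀ yb` into positive and negative parts gives the dual feasible point
(`exists_dual_near_optimal`).
-/

/-- Approximate Lagrangian duality: some multiplier `y` makes the Lagrangian
`c x + y (b - A x)` exceed the primal optimum minus `ε` on the whole box. -/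
theorem exists_lagrange_multiplier {m n : ℕ} (A : Matrix (Fin m) (Fin n) ℝ)
    (b : Fin m → ℝ) (c lo hi xs : Fin n → ℝ)
    (hAx : A *ᵥ xs = b) (hlb : lo ≤ xs) (hub : xs ≤ hi)
    (hopt : ∀ x : Fin n → ℝ, A *ᵥ x = b → lo ≤ x → x ≤ hi → c ⬝ᵥ xs ≤ c ⬝ᵥ x)
    {ε : ℝ} (hε : 0 < ε) :
    ∃ y : Fin m → ℝ, ∀ x : Fin n → ℝ, lo ≤ x → x ≤ hi →
      c ⬝ᵥ xs - ε < (c - Aᵀ *ᵥ y) ⬝ᵥ x + y ⬝ᵥ b := by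
  let L : (Fin n → ℝ) →ₗ[ℝ] (Fin m → ℝ) × ℝ :=
    (Matrix.mulVecLin A).prod (dotProductBilin ℝ ℝ c)
  have hL : ∀ x, L x = (A *ᵥ x, c ⬝ᵥ x) := fun x => rfl
  have hconv : Convex ℝ (L '' Set.Icc lo hi) := (convex_Icc lo hi).linear_image L
  have hclosed : IsClosed (L '' Set.Icc lo hi) :=
    (isCompact_Icc.image L.continuous_of_finiteDimensional).isClosed
  have hnot : (b, c ⬝ᵥ xs - ε) ∉ L '' Set.Icc lo hi := by
    rintro ⟨x, hx, hxe⟩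
    rw [hL, Prod.mk.injEq] at hxe
    linarith [hopt x hxe.1 hx.1 hx.2, hxe.2]
  obtain ⟨f, u, hfu, huf⟩ := geometric_hahn_banach_point_closed hconv hclosed hnot
  let w : Fin m → ℝ := fun i => f (Pi.single i 1, 0)
  let t : ℝ := f (0, 1)
  have hf : ∀ v s, f (v, s) = w ⬝ᵥ v + t * s := by
    intro v s
    have h1 : ((v, s) : (Fin m → ℝ) × ℝ) = (v, 0) + s • (0, 1) := by simp
    have h2 : f (v, 0) = w ⬝ᵥ v := by
      have := LinearMap.pi_apply_eq_sum_univ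
        (f.toLinearMap.comp (LinearMap.inl ℝ (Fin m → ℝ) ℝ)) v
      simp only [LinearMap.comp_apply, LinearMap.inl_apply, smul_eq_mul] at this
      refine this.trans (Finset.sum_congr rfl fun i _ => ?_)
      have hs : (fun j => if i = j then (1 : ℝ) else 0) = Pi.single i 1 := by
        ext j
        simp [Pi.single_apply, eq_comm]
      rw [mul_comm, hs]
      rfl
    rw [h1, map_add, map_smul, h2, smul_eq_mul, mul_comm s]
  have hsep : ∀ x, lo ≤ x → x ≤ hi →
      w ⬝ᵥ b + t * (c ⬝ᵥ xs - ε) < w ⬝ᵥ (A *ᵥ x) + t * (c ⬝ᵥ x) := by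
    intro x h1 h2
    rw [← hf, ← hf, ← hL]
    exact hfu.trans (huf _ ⟨x, ⟨h1, h2⟩, rfl⟩)
  -- The separating hyperplane is not vertical: test it at the feasible point `xs`.
  have ht : 0 < t := by
    have h := hsep xs hlb hub
    rw [hAx] at h
    have : 0 < t * ε := by linarith
    exact pos_of_mul_pos_left this hε.le
  refine ⟨-(t⁻¹ • w), fun x h1 h2 => ?_⟩
  have h := hsep x h1 h2
  have hT : (Aᵀ *ᵥ w) ⬝ᵥ x = w ⬝ᵥ (A *ᵥ x) := by
    rw [mulVec_transpose, dotProduct_mulVec]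
  rw [mulVec_neg, mulVec_smul, sub_neg_eq_add, add_dotProduct, smul_dotProduct, neg_dotProduct,
    smul_dotProduct, hT, smul_eq_mul, smul_eq_mul]
  refine lt_of_mul_lt_mul_left ?_ ht.le
  have e : t * (c ⬝ᵥ x + t⁻¹ * w ⬝ᵥ (A *ᵥ x) + -(t⁻¹ * w ⬝ᵥ b))
      = t * (c ⬝ᵥ x) + w ⬝ᵥ (A *ᵥ x) - w ⬝ᵥ b := by
    field_simp
    ring
  rw [e]
  linarith

/-- Dual feasible values come arbitrarily close to the primal optimum. -/
theorem exists_dual_near_optimal {m n : ℕ} (A : Matrix (Fin m) (Fin n) ℝ)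
    (b : Fin m → ℝ) (c lo hi xs : Fin n → ℝ)
    (hAx : A *ᵥ xs = b) (hlb : lo ≤ xs) (hub : xs ≤ hi)
    (hopt : ∀ x : Fin n → ℝ, A *ᵥ x = b → lo ≤ x → x ≤ hi → c ⬝ᵥ xs ≤ c ⬝ᵥ x)
    {ε : ℝ} (hε : 0 < ε) :
    ∃ (yb : Fin m → ℝ) (yl yu : Fin n → ℝ), Aᵀ *ᵥ yb + yl + yu = c ∧ 0 ≤ yl ∧ yu ≤ 0 ∧
      c ⬝ᵥ xs - ε < yb ⬝ᵥ b + yl ⬝ᵥ lo + yu ⬝ᵥ hi := by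
  obtain ⟨y, hy⟩ := exists_lagrange_multiplier A b c lo hi xs hAx hlb hub hopt hε
  set r := c - Aᵀ *ᵥ y with hr
  refine ⟨y, fun j => max (r j) 0, fun j => min (r j) 0, ?_, fun j => le_max_right _ _,
    fun j => min_le_right _ _, ?_⟩
  · ext j
    have h1 := max_add_min (r j) 0
    have h2 : r j = c j - (Aᵀ *ᵥ y) j := rfl
    simp only [Pi.add_apply]
    linarith
  · -- The vertex of the box minimizing the Lagrangian turns its value into the dual objective.
    have hbox : ∀ j, lo j ≤ hi j := fun j => (hlb j).trans (hub j)
    have h := hy (fun j => if 0 ≤ r j then lo j else hi j)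
      (fun j => by dsimp only; split_ifs <;> simp [hbox j])
      (fun j => by dsimp only; split_ifs <;> simp [hbox j])
    have e : r ⬝ᵥ (fun j => if 0 ≤ r j then lo j else hi j)
        = (fun j => max (r j) 0) ⬝ᵥ lo + (fun j => min (r j) 0) ⬝ᵥ hi := by
      simp only [dotProduct, ← Finset.sum_add_distrib]
      refine Finset.sum_congr rfl fun j _ => ?_
      split_ifs with hj
      · simp [hj]
      · simp [(not_le.mp hj).le]
    linarith

/-- Complementary slackness, necessity direction: if `x*` is primal optimal and
`y*` is dual optimal, then complementary slackness holds. -/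
theorem lp_complementary_slackness_necessary {m n : ℕ} (A : Matrix (Fin m) (Fin n) ℝ)
    (b : Fin m → ℝ) (c lo hi xs : Fin n → ℝ)
    (yb : Fin m → ℝ) (yl yu : Fin n → ℝ)
    (hAx : A *ᵥ xs = b) (hlb : lo ≤ xs) (hub : xs ≤ hi)
    (hdual : Aᵀ *ᵥ yb + yl + yu = c) (hyl : 0 ≤ yl) (hyu : yu ≤ 0)
    (hprimal_opt : ∀ x : Fin n → ℝ, A *ᵥ x = b → lo ≤ x → x ≤ hi → c ⬝ᵥ xs ≤ c ⬝ᵥ x)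
    (hdual_opt : ∀ (yb' : Fin m → ℝ) (yl' yu' : Fin n → ℝ),
      Aᵀ *ᵥ yb' + yl' + yu' = c → 0 ≤ yl' → yu' ≤ 0 →
      yb' ⬝ᵥ b + yl' ⬝ᵥ lo + yu' ⬝ᵥ hi ≤ yb ⬝ᵥ b + yl ⬝ᵥ lo + yu ⬝ᵥ hi) :
    (∀ j, (xs j - lo j) * yl j = 0) ∧ (∀ j, (xs j - hi j) * yu j = 0) := by
  have hstrong : c ⬝ᵥ xs ≤ yb ⬝ᵥ b + yl ⬝ᵥ lo + yu ⬝ᵥ hi := by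
    refine le_of_forall_pos_le_add fun ε hε => ?_
    obtain ⟨yb', yl', yu', h1, h2, h3, h4⟩ :=
      exists_dual_near_optimal A b c lo hi xs hAx hlb hub hprimal_opt hε
    linarith [hdual_opt yb' yl' yu' h1 h2 h3]
  have hc : c ⬝ᵥ xs = yb ⬝ᵥ b + yl ⬝ᵥ xs + yu ⬝ᵥ xs := by
    rw [← hdual, add_dotProduct, add_dotProduct, mulVec_transpose, ← dotProduct_mulVec, hAx]
  have hl : ∀ j, 0 ≤ (xs j - lo j) * yl j := fun j =>
    mul_nonneg (sub_nonneg.2 (hlb j)) (hyl j)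
  have hu : ∀ j, 0 ≤ (xs j - hi j) * yu j := fun j =>
    mul_nonneg_of_nonpos_of_nonpos (sub_nonpos.2 (hub j)) (hyu j)
  have hsl : ∑ j, (xs j - lo j) * yl j = yl ⬝ᵥ xs - yl ⬝ᵥ lo := by
    rw [← dotProduct_sub]
    exact Finset.sum_congr rfl fun j _ => mul_comm _ _
  have hsu : ∑ j, (xs j - hi j) * yu j = yu ⬝ᵥ xs - yu ⬝ᵥ hi := by
    rw [← dotProduct_sub]
    exact Finset.sum_congr rfl fun j _ => mul_comm _ _
  have hl0 := Finset.sum_nonneg fun j (_ : j ∈ Finset.univ) => hl j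
  have hu0 := Finset.sum_nonneg fun j (_ : j ∈ Finset.univ) => hu j
  have el : ∑ j, (xs j - lo j) * yl j = 0 := by linarith
  have eu : ∑ j, (xs j - hi j) * yu j = 0 := by linarith
  exact ⟨fun j => (Finset.sum_eq_zero_iff_of_nonneg fun j _ => hl j).1 el j (Finset.mem_univ j),
    fun j => (Finset.sum_eq_zero_iff_of_nonneg fun j _ => hu j).1 eu j (Finset.mem_univ j)⟩
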